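/- arXiv:2108.11937 — 2 statements merged into one kernel-verified Lean document; each statement's English description precedes it below -/
import Mathlib

section
/- Let k > 1 be an integer and α a complex number. The function n ↦ g_k(n)/n^α is an MO function if and only if k is a prime power, Re α > 0, and ζ(α) = 0, where ζ is the Riemann zeta function. -/
open Filter Finset

/-- `f` is a multiplicative arithmetical function: `f 1 = 1` and
`f (m*n) = f m * f n` whenever `gcd m n = 1`. -/
def IsMultFn (f : ℕ → ℂ) : Prop :=
  f 1 = 1 ∧ ∀ m n : ℕ, Nat.Coprime m n → f (m * n) = f m * f n

/-- The series `∑_{k=0}^∞ g k` converges (in the sense of partial sums) to `L`. -/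
def SeriesTendsTo (g : ℕ → ℂ) (L : ℂ) : Prop :=
  Filter.Tendsto (fun N => ∑ k ∈ Finset.range N, g k) Filter.atTop (nhds L)

/-- `f` is an MO function: multiplicative, `∑_{n=1}^∞ f n = 0`, and for each prime `p`
the series `∑_{k=0}^∞ f (p^k)` converges to a nonzero value. -/
def IsMO (f : ℕ → ℂ) : Prop :=
  IsMultFn f ∧ SeriesTendsTo (fun n => f (n + 1)) 0 ∧
    ∀ p : ℕ, p.Prime → ∃ L : ℂ, L ≠ 0 ∧ SeriesTendsTo (fun k => f (p ^ k)) L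

/-- For `k > 1`, `gk k n = 1 - k` if `k ∣ n` and `1` otherwise. -/
noncomputable def gk (k : ℕ) (n : ℕ) : ℂ := if k ∣ n then 1 - (k : ℂ) else 1

open Complex in
theorem aux_diff_bound (s : ℂ) (n : ℕ) (hs : 0 < s.re) :
    ‖((n + 1 : ℕ) : ℂ) ^ (-s) - ((n + 2 : ℕ) : ℂ) ^ (-s)‖ ≤ ‖s‖ * ((n + 1 : ℕ) : ℝ) ^ (-s.re - 1) := by
  have hs0 : -s ≠ 0 := by
    intro h
    have : s = 0 := by simpa using h
    simp [this] at hs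
  have key := norm_image_sub_le_of_norm_deriv_le_segment' (a := ((n + 1 : ℕ) : ℝ))
    (b := ((n + 2 : ℕ) : ℝ)) (f := fun y : ℝ => (y : ℂ) ^ (-s))
    (f' := fun x => (-s) * (x : ℂ) ^ (-s - 1)) (C := ‖s‖ * ((n + 1 : ℕ) : ℝ) ^ (-s.re - 1))
    (fun x hx => by
      have hx0 : x ≠ 0 := by
        have := hx.1
        push_cast at this
        have := Nat.cast_nonneg (α := ℝ) n
        linarith
      exact (hasDerivAt_ofReal_cpow_const hx0 hs0).hasDerivWithinAt)
    (fun x hx => by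
      have h1 : (0 : ℝ) < ((n + 1 : ℕ) : ℝ) := by positivity
      have hx0 : 0 < x := lt_of_lt_of_le h1 hx.1
      rw [norm_mul, norm_neg, Complex.norm_cpow_eq_rpow_re_of_pos hx0]
      simp only [sub_re, neg_re, one_re]
      gcongr ?_ * ?_
      exact Real.rpow_le_rpow_of_nonpos h1 hx.1 (by linarith))
    ((n + 2 : ℕ) : ℝ) ⟨by push_cast; linarith, le_refl _⟩
  rw [norm_sub_rev]
  have e : (((n + 2 : ℕ) : ℝ) - ((n + 1 : ℕ) : ℝ)) = 1 := by push_cast; ring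
  rw [e, mul_one] at key
  simpa using key

/-- Terms after summation by parts. -/
noncomputable def auxT (k : ℕ) (n : ℕ) (s : ℂ) : ℂ :=
  (((n + 1) % k : ℕ) : ℂ) * (((n + 1 : ℕ) : ℂ) ^ (-s) - ((n + 2 : ℕ) : ℂ) ^ (-s))

theorem auxT_bound (k : ℕ) (hk : 1 < k) (n : ℕ) (s : ℂ) (σ R : ℝ) (hσ : 0 < σ) (hs : σ ≤ s.re)
    (hR : ‖s‖ ≤ R) : ‖auxT k n s‖ ≤ k * (R * ((n + 1 : ℕ) : ℝ) ^ (-σ - 1)) := by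
  unfold auxT
  rw [norm_mul, Complex.norm_natCast]
  have h1 : (((n + 1) % k : ℕ) : ℝ) ≤ k := by exact_mod_cast (Nat.mod_lt _ (by omega)).le
  have h2 := aux_diff_bound s n (by linarith)
  have h3 : ((n + 1 : ℕ) : ℝ) ^ (-s.re - 1) ≤ ((n + 1 : ℕ) : ℝ) ^ (-σ - 1) :=
    Real.rpow_le_rpow_of_exponent_le (by push_cast; linarith [Nat.cast_nonneg (α := ℝ) n])
      (by linarith)
  have h0 : 0 ≤ R := le_trans (norm_nonneg _) hR
  refine mul_le_mul h1 (h2.trans ?_) (norm_nonneg _) (by positivity)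
  gcongr

theorem aux_summable (k : ℕ) (σ R : ℝ) (hσ : 0 < σ) :
    Summable (fun n : ℕ => (k : ℝ) * (R * ((n + 1 : ℕ) : ℝ) ^ (-σ - 1))) := by
  apply Summable.mul_left
  apply Summable.mul_left
  have := (Real.summable_nat_rpow (p := -σ - 1)).2 (by linarith)
  exact (summable_nat_add_iff 1).2 this

theorem auxT_summable (k : ℕ) (hk : 1 < k) (s : ℂ) (hs : 0 < s.re) :
    Summable (fun n => auxT k n s) :=
  Summable.of_norm_bounded (aux_summable k s.re ‖s‖ hs)
    (fun n => auxT_bound k hk n s s.re ‖s‖ hs le_rfl le_rfl)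

theorem auxT_diff (k : ℕ) (n : ℕ) : Differentiable ℂ (auxT k n) := by
  unfold auxT
  intro s
  apply DifferentiableAt.const_mul
  apply DifferentiableAt.sub
  · exact (differentiableAt_id.neg).const_cpow (Or.inl (Nat.cast_ne_zero.2 (Nat.succ_ne_zero _)))
  · exact (differentiableAt_id.neg).const_cpow (Or.inl (Nat.cast_ne_zero.2 (Nat.succ_ne_zero _)))

theorem auxG_diff (k : ℕ) (hk : 1 < k) :
    DifferentiableOn ℂ (fun s => ∑' n, auxT k n s) {s : ℂ | 0 < s.re} := by
  intro s hs
  have hs : 0 < s.re := hs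
  have hU : IsOpen ({w : ℂ | s.re / 2 < w.re} ∩ {w : ℂ | ‖w‖ < ‖s‖ + 1}) :=
    (isOpen_lt continuous_const Complex.continuous_re).inter (isOpen_lt continuous_norm continuous_const)
  have h := Complex.differentiableOn_tsum_of_summable_norm
    (aux_summable k (s.re / 2) (‖s‖ + 1) (by linarith))
    (fun n => (auxT_diff k n).differentiableOn) hU
    (fun n w hw => auxT_bound k hk n w _ _ (by linarith) (le_of_lt hw.1) (le_of_lt hw.2))
  exact ((h s ⟨by simp only [Set.mem_ofPred_eq]; linarith, by simp⟩).differentiableAt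
    (hU.mem_nhds ⟨by simp only [Set.mem_ofPred_eq]; linarith, by simp⟩)).differentiableWithinAt

theorem gk_succ (k : ℕ) (hk : 1 < k) (n : ℕ) :
    gk k (n + 1) = (((n + 1) % k : ℕ) : ℂ) - ((n % k : ℕ) : ℂ) := by
  unfold gk
  split_ifs with h
  · have h1 : (n + 1) % k = 0 := Nat.mod_eq_zero_of_dvd h
    have h2 : n % k + 1 = k := by
      have h3 := Nat.mod_lt n (by omega : 0 < k)
      by_contra h4
      have : (n + 1) % k = n % k + 1 := by
        rw [Nat.add_mod, Nat.mod_eq_of_lt hk, Nat.mod_eq_of_lt (by omega)]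
      omega
    have h3 : (k : ℂ) = ((n % k : ℕ) : ℂ) + 1 := by exact_mod_cast h2.symm
    rw [h1, Nat.cast_zero, zero_sub]
    linear_combination -h3
  · have h3 := Nat.mod_lt n (by omega : 0 < k)
    have h4 : n % k + 1 ≠ k := by
      intro h5
      apply h
      rw [Nat.dvd_iff_mod_eq_zero, Nat.add_mod, Nat.mod_eq_of_lt hk, h5, Nat.mod_self]
    have : (n + 1) % k = n % k + 1 := by
      rw [Nat.add_mod, Nat.mod_eq_of_lt hk, Nat.mod_eq_of_lt (by omega)]
    rw [this]
    push_cast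
    ring

theorem aux_parts (k : ℕ) (hk : 1 < k) (s : ℂ) (N : ℕ) :
    ∑ n ∈ Finset.range N, gk k (n + 1) / ((n + 1 : ℕ) : ℂ) ^ s =
      ((N % k : ℕ) : ℂ) * ((N + 1 : ℕ) : ℂ) ^ (-s) + ∑ n ∈ Finset.range N, auxT k n s := by
  induction N with
  | zero => simp
  | succ N ih =>
    rw [Finset.sum_range_succ, Finset.sum_range_succ, ih, gk_succ k hk, auxT, Complex.cpow_neg,
      div_eq_mul_inv]
    ring

theorem aux_tendsto (k : ℕ) (hk : 1 < k) (s : ℂ) (hs : 0 < s.re) :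
    SeriesTendsTo (fun n => gk k (n + 1) / ((n + 1 : ℕ) : ℂ) ^ s) (∑' n, auxT k n s) := by
  unfold SeriesTendsTo
  simp_rw [aux_parts k hk s]
  have h1 := (auxT_summable k hk s hs).hasSum.tendsto_sum_nat
  have h2 : Filter.Tendsto (fun N : ℕ => ((N % k : ℕ) : ℂ) * ((N + 1 : ℕ) : ℂ) ^ (-s))
      Filter.atTop (nhds 0) := by
    have h3 : Filter.Tendsto (fun N : ℕ => (k : ℝ) * ((N + 1 : ℕ) : ℝ) ^ (-s.re))
        Filter.atTop (nhds 0) := by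
      have := ((tendsto_rpow_neg_atTop hs).comp (tendsto_natCast_atTop_atTop (R := ℝ))).comp
        (Filter.tendsto_add_atTop_nat 1)
      simpa using this.const_mul (k : ℝ)
    refine squeeze_zero_norm (fun N => ?_) h3
    rw [norm_mul, Complex.norm_natCast, Complex.norm_natCast_cpow_of_pos (Nat.succ_pos N)]
    have h1 : ((N % k : ℕ) : ℝ) ≤ k := by exact_mod_cast (Nat.mod_lt _ (by omega)).le
    rw [Complex.neg_re]
    gcongr
  simpa using h2.add h1

theorem aux_eq_gt_one (k : ℕ) (hk : 1 < k) (s : ℂ) (hs : 1 < s.re) :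
    ∑' n, auxT k n s = (1 - (k : ℂ) ^ (1 - s)) * riemannZeta s := by
  have hk0 : (k : ℂ) ≠ 0 := by exact_mod_cast (by omega : k ≠ 0)
  have hs0 : s ≠ 0 := by
    rintro rfl
    simp at hs
    linarith
  have hZ : HasSum (fun n : ℕ => 1 / (n : ℂ) ^ s) (riemannZeta s) := by
    rw [zeta_eq_tsum_one_div_nat_cpow hs]
    exact ((Complex.summable_one_div_nat_cpow).2 hs).hasSum
  have hinj : Function.Injective (fun n : ℕ => k * n) :=
    fun a b h => Nat.eq_of_mul_eq_mul_left (by omega) h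
  have hM : HasSum (fun n : ℕ => if k ∣ n then 1 / (n : ℂ) ^ s else 0)
      ((k : ℂ) ^ (-s) * riemannZeta s) := by
    rw [← hinj.hasSum_iff]
    · have e : ((fun n : ℕ => if k ∣ n then 1 / (n : ℂ) ^ s else 0) ∘ fun n : ℕ => k * n) =
          fun n : ℕ => (k : ℂ) ^ (-s) * (1 / (n : ℂ) ^ s) := by
        funext n
        simp only [Function.comp_apply, dvd_mul_right, if_true]
        rw [Nat.cast_mul, Complex.natCast_mul_natCast_cpow, Complex.cpow_neg]
        simp only [one_div, mul_inv]
      rw [e]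
      exact hZ.mul_left _
    · intro x hx
      rw [if_neg]
      rintro ⟨c, rfl⟩
      exact hx ⟨c, rfl⟩
  have hA : HasSum (fun n : ℕ => gk k n / (n : ℂ) ^ s) ((1 - (k : ℂ) ^ (1 - s)) * riemannZeta s) := by
    have := hZ.sub (hM.mul_left (k : ℂ))
    have e1 : (fun n : ℕ => gk k n / (n : ℂ) ^ s) = fun n : ℕ =>
        1 / (n : ℂ) ^ s - (k : ℂ) * (if k ∣ n then 1 / (n : ℂ) ^ s else 0) := by
      funext n
      unfold gk
      split_ifs <;> ring
    have e2 : (1 - (k : ℂ) ^ (1 - s)) * riemannZeta s =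
        riemannZeta s - (k : ℂ) * ((k : ℂ) ^ (-s) * riemannZeta s) := by
      rw [sub_eq_add_neg 1 s, Complex.cpow_add _ _ hk0, Complex.cpow_one]
      ring
    rw [e1, e2]
    exact this
  have hB := (hasSum_nat_add_iff' 1).2 hA
  simp only [Finset.sum_range_one, Nat.cast_zero, Complex.zero_cpow hs0, div_zero, sub_zero] at hB
  exact tendsto_nhds_unique (aux_tendsto k hk s (by linarith)) hB.tendsto_sum_nat

theorem aux_eq (k : ℕ) (hk : 1 < k) (s : ℂ) (hs : 0 < s.re) (hs1 : s ≠ 1) :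
    ∑' n, auxT k n s = (1 - (k : ℂ) ^ (1 - s)) * riemannZeta s := by
  have hk0 : (k : ℂ) ≠ 0 := by exact_mod_cast (by omega : k ≠ 0)
  have main : ∀ c : ℝ, (c = 1 ∨ c = -1) → s.re - 1 < c * s.im →
      ∑' n, auxT k n s = (1 - (k : ℂ) ^ (1 - s)) * riemannZeta s := by
    intro c hc hsc
    set U : Set ℂ := {w | 0 < w.re} ∩ {w | w.re - c * w.im < 1} with hUdef
    have hUo : IsOpen U := (isOpen_lt continuous_const Complex.continuous_re).inter
      (isOpen_lt (Complex.continuous_re.sub (continuous_const.mul Complex.continuous_im))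
        continuous_const)
    have hUc : Convex ℝ U := by
      apply Convex.inter
      · exact convex_halfSpace_re_gt 0
      · refine convex_halfSpace_lt (f := fun w : ℂ => w.re - c * w.im) ⟨?_, ?_⟩ 1
        · intro x y
          simp
          ring
        · intro x y
          simp
          ring
    have hz : (⟨2, 2 * c⟩ : ℂ) ∈ U := by
      refine ⟨by simp, ?_⟩
      rcases hc with rfl | rfl <;> norm_num
    have hF : DifferentiableOn ℂ (fun s => ∑' n, auxT k n s) U :=
      (auxG_diff k hk).mono Set.inter_subset_left
    have hG : DifferentiableOn ℂ (fun s => (1 - (k : ℂ) ^ (1 - s)) * riemannZeta s) U := by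
      intro w hw
      have hw1 : w ≠ 1 := by
        rintro rfl
        have := hw.2
        simp at this
      refine DifferentiableAt.differentiableWithinAt ?_
      refine DifferentiableAt.mul ?_ (differentiableAt_riemannZeta hw1)
      refine (differentiableAt_const _).sub ?_
      exact ((differentiableAt_const _).sub differentiableAt_id).const_cpow (Or.inl hk0)
    refine (hF.analyticOnNhd hUo).eqOn_of_preconnected_of_eventuallyEq (hG.analyticOnNhd hUo)
      hUc.isPreconnected hz ?_ ⟨hs, ?_⟩
    · have : {w : ℂ | 1 < w.re} ∈ nhds (⟨2, 2 * c⟩ : ℂ) :=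
        (isOpen_lt continuous_const Complex.continuous_re).mem_nhds (by simp)
      filter_upwards [this] with w hw
      exact aux_eq_gt_one k hk w hw
    · simp only [Set.mem_ofPred_eq]
      linarith
  rcases lt_or_ge 1 s.re with h | h
  · exact aux_eq_gt_one k hk s h
  by_cases h1 : s.re - 1 < 1 * s.im
  · exact main 1 (Or.inl rfl) h1
  · refine main (-1) (Or.inr rfl) ?_
    push Not at h1
    by_contra h2
    push Not at h2
    apply hs1
    apply Complex.ext
    · simp; linarith
    · simp; linarith

theorem aux_cpow_pow (p j : ℕ) (s : ℂ) : ((p ^ j : ℕ) : ℂ) ^ s = ((p : ℂ) ^ s) ^ j := by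
  induction j with
  | zero => simp
  | succ j ih => rw [pow_succ, Nat.cast_mul, Complex.natCast_mul_natCast_cpow, ih, pow_succ]

theorem aux_norm_lt (p : ℕ) (hp : p.Prime) (s : ℂ) (hs : 0 < s.re) : ‖((p : ℂ) ^ s)⁻¹‖ < 1 := by
  rw [← Complex.cpow_neg, Complex.norm_natCast_cpow_of_pos hp.pos, Complex.neg_re]
  exact Real.rpow_lt_one_of_one_lt_of_neg (by exact_mod_cast hp.one_lt) (by linarith)

theorem aux_local_eq (p a : ℕ) (hp : p.Prime) (s : ℂ) (hs : 0 < s.re) :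
    SeriesTendsTo (fun j => gk (p ^ a) (p ^ j) / ((p ^ j : ℕ) : ℂ) ^ s)
      ((1 - ((p ^ a : ℕ) : ℂ) ^ (1 - s)) * (1 - ((p : ℂ) ^ s)⁻¹)⁻¹) := by
  set x := ((p : ℂ) ^ s)⁻¹ with hx
  have hx1 : ‖x‖ < 1 := aux_norm_lt p hp s hs
  have hpa : ((p ^ a : ℕ) : ℂ) ≠ 0 := by exact_mod_cast (pow_pos hp.pos a).ne'
  have h1 := hasSum_geometric_of_norm_lt_one hx1
  have h2 : HasSum (fun j : ℕ => if a ≤ j then x ^ j else 0) (x ^ a * (1 - x)⁻¹) := by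
    rw [← (add_left_injective a).hasSum_iff]
    · have e : ((fun j : ℕ => if a ≤ j then x ^ j else 0) ∘ fun j : ℕ => j + a) =
          fun j : ℕ => x ^ a * x ^ j := by
        funext j
        simp [pow_add, mul_comm]
      rw [e]
      exact h1.mul_left (x ^ a)
    · intro j hj
      rw [if_neg]
      intro h
      exact hj ⟨j - a, by simp; omega⟩
  have h3 := (h1.sub (h2.mul_left ((p ^ a : ℕ) : ℂ))).tendsto_sum_nat
  unfold SeriesTendsTo
  convert h3 using 1
  · funext N
    refine Finset.sum_congr rfl fun j _ => ?_
    beta_reduce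
    rw [aux_cpow_pow, div_eq_mul_inv, ← inv_pow, ← hx, gk]
    simp only [Nat.pow_dvd_pow_iff_le_right hp.one_lt]
    split_ifs <;> ring
  · congr 1
    rw [sub_eq_add_neg 1 s, Complex.cpow_add _ _ hpa, Complex.cpow_one, Complex.cpow_neg,
      aux_cpow_pow, ← inv_pow, ← hx]
    ring

theorem aux_local_ne (p q a : ℕ) (ha : 0 < a) (hp : p.Prime) (hq : q.Prime) (hpq : p ≠ q)
    (s : ℂ) (hs : 0 < s.re) :
    SeriesTendsTo (fun j => gk (p ^ a) (q ^ j) / ((q ^ j : ℕ) : ℂ) ^ s)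
      ((1 - ((q : ℂ) ^ s)⁻¹)⁻¹) := by
  have h1 := (hasSum_geometric_of_norm_lt_one (aux_norm_lt q hq s hs)).tendsto_sum_nat
  unfold SeriesTendsTo
  convert h1 using 1
  funext N
  refine Finset.sum_congr rfl fun j _ => ?_
  have : ¬ (p ^ a ∣ q ^ j) := by
    intro h
    have h2 : p ∣ q ^ j := (dvd_pow_self p ha.ne').trans h
    exact hpq ((Nat.prime_dvd_prime_iff_eq hp hq).1 (hp.dvd_of_dvd_pow h2))
  beta_reduce
  rw [aux_cpow_pow, div_eq_mul_inv, ← inv_pow, gk, if_neg this, one_mul]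

theorem aux_one_sub_ne (p : ℕ) (hp : p.Prime) (s : ℂ) (hs : 0 < s.re) :
    (1 - ((p : ℂ) ^ s)⁻¹)⁻¹ ≠ 0 := by
  apply inv_ne_zero
  intro h
  have h1 := aux_norm_lt p hp s hs
  rw [← sub_eq_zero.1 h] at h1
  simp at h1

theorem gk_mult (p a : ℕ) (ha : 0 < a) (hp : p.Prime) (m n : ℕ) (h : Nat.Coprime m n) :
    gk (p ^ a) (m * n) = gk (p ^ a) m * gk (p ^ a) n := by
  have hone : ∀ x y : ℕ, Nat.Coprime x y → p ∣ x → gk (p ^ a) (x * y) = gk (p ^ a) x * gk (p ^ a) y := by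
    intro x y hxy hx
    have hpy : ¬ p ∣ y := fun hy => hp.one_lt.ne' (Nat.eq_one_of_dvd_coprimes hxy hx hy)
    have hy : ¬ p ^ a ∣ y := fun h => hpy ((dvd_pow_self p ha.ne').trans h)
    have hc : Nat.Coprime (p ^ a) y := Nat.Coprime.pow_left _ ((Nat.Prime.coprime_iff_not_dvd hp).2 hpy)
    unfold gk
    simp only [hc.dvd_mul_right, if_neg hy, mul_one]
  by_cases hm : p ∣ m
  · exact hone m n h hm
  by_cases hn : p ∣ n
  · rw [mul_comm m n, mul_comm (gk _ m)]
    exact hone n m h.symm hn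
  have hmn : ¬ p ∣ m * n := fun h => (hp.dvd_mul.1 h).elim hm hn
  have hh : ∀ x, ¬ p ∣ x → gk (p ^ a) x = 1 := by
    intro x hx
    rw [gk, if_neg]
    exact fun h => hx ((dvd_pow_self p ha.ne').trans h)
  rw [hh _ hm, hh _ hn, hh _ hmn, one_mul]

theorem aux_primePow (k : ℕ) (hk : 1 < k) (s : ℂ)
    (h : IsMultFn (fun n => gk k n / (n : ℂ) ^ s)) : IsPrimePow k := by
  obtain ⟨p, hp, hpk⟩ := Nat.exists_prime_and_dvd (by omega : k ≠ 1)
  obtain ⟨a, b, hpb, hkab⟩ := Nat.exists_eq_pow_mul_and_not_dvd (by omega : k ≠ 0) p hp.one_lt.ne'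
  have ha : 0 < a := by
    rcases Nat.eq_zero_or_pos a with rfl | h
    · exact absurd (by simpa [hkab] using hpk) hpb
    · exact h
  have hb0 : 0 < b := Nat.pos_of_ne_zero (by rintro rfl; simp at hpb)
  rcases eq_or_ne b 1 with rfl | hb
  · rw [isPrimePow_nat_iff]
    exact ⟨p, a, hp, ha, by rw [hkab, mul_one]⟩
  exfalso
  have hc : Nat.Coprime (p ^ a) b := Nat.Coprime.pow_left _ ((Nat.Prime.coprime_iff_not_dvd hp).2 hpb)
  have hpa : 1 < p ^ a := Nat.one_lt_pow ha.ne' hp.one_lt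
  have h1 := h.2 _ _ hc
  have h2 : ¬ k ∣ p ^ a := by
    intro hd
    have := Nat.le_of_dvd (by omega) hd
    rw [hkab] at this
    have : p ^ a * 2 ≤ p ^ a * b := Nat.mul_le_mul_left _ (by omega)
    omega
  have h3 : ¬ k ∣ b := by
    intro hd
    have := Nat.le_of_dvd hb0 hd
    rw [hkab] at this
    have : 2 * b ≤ p ^ a * b := Nat.mul_le_mul_right _ (by omega)
    omega
  simp only [← hkab] at h1
  have hne : (k : ℂ) ^ s ≠ 0 := by
    rw [Ne, Complex.cpow_eq_zero_iff]
    rintro ⟨h, -⟩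
    have : k = 0 := by exact_mod_cast h
    omega
  have e : (k : ℂ) ^ s = ((p ^ a : ℕ) : ℂ) ^ s * (b : ℂ) ^ s := by
    rw [← Complex.natCast_mul_natCast_cpow, ← Nat.cast_mul, ← hkab]
  simp only [gk, dvd_refl, if_true, if_neg h2, if_neg h3] at h1
  rw [div_mul_div_comm, ← e, one_mul, div_left_inj' hne] at h1
  have : (k : ℂ) = 0 := by linear_combination -h1
  have : k = 0 := by exact_mod_cast this
  omega

theorem aux_re_pos (k : ℕ) (hk : 1 < k) (s L : ℂ)
    (h : SeriesTendsTo (fun n => gk k (n + 1) / ((n + 1 : ℕ) : ℂ) ^ s) L) : 0 < s.re := by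
  by_contra hs
  push Not at hs
  have h1 : Filter.Tendsto (fun n : ℕ => gk k (n + 1) / ((n + 1 : ℕ) : ℂ) ^ s)
      Filter.atTop (nhds 0) := by
    have := (h.comp (Filter.tendsto_add_atTop_nat 1)).sub h
    simpa [Function.comp_def, Finset.sum_range_succ] using this
  have h2 : Filter.Tendsto (fun m : ℕ => k * m) Filter.atTop Filter.atTop :=
    Filter.tendsto_id.const_mul_atTop' (by omega)
  have h3 := (h1.comp h2).norm
  rw [norm_zero] at h3
  have h4 := ge_of_tendsto' (b := 1) h3 (fun m => by
    have : ¬ k ∣ k * m + 1 := by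
      intro hd
      have := (Nat.dvd_add_right (Dvd.intro m rfl)).1 hd
      have := Nat.le_of_dvd one_pos this
      omega
    simp only [Function.comp_apply, gk, if_neg this]
    rw [one_div, ← Complex.cpow_neg, Complex.norm_natCast_cpow_of_pos (Nat.succ_pos _)]
    exact Real.one_le_rpow (by push_cast; linarith [show (0 : ℝ) ≤ k * m by positivity])
      (by simpa using hs))
  linarith

theorem stmt18 (k : ℕ) (hk : 1 < k) (α : ℂ) :
    IsMO (fun n => gk k n / (n : ℂ) ^ α) ↔
      (IsPrimePow k ∧ 0 < α.re ∧ riemannZeta α = 0) := by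
  constructor
  · rintro ⟨hm, hsum, hloc⟩
    have hpp := aux_primePow k hk α hm
    have hre := aux_re_pos k hk α 0 hsum
    refine ⟨hpp, hre, ?_⟩
    obtain ⟨p, a, hp, ha, rfl⟩ := (isPrimePow_nat_iff k).1 hpp
    obtain ⟨L, hL, hLt⟩ := hloc p hp
    have e := tendsto_nhds_unique hLt (aux_local_eq p a hp α hre)
    have hne : 1 - ((p ^ a : ℕ) : ℂ) ^ (1 - α) ≠ 0 := by
      intro h
      rw [h, zero_mul] at e
      exact hL e
    have h1 : α ≠ 1 := by
      rintro rfl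
      simp at hne
    have e2 := tendsto_nhds_unique hsum (aux_tendsto _ hk α hre)
    rw [aux_eq _ hk α hre h1] at e2
    exact (mul_eq_zero.1 e2.symm).resolve_left hne
  · rintro ⟨hpp, hre, hz⟩
    have h1 : α ≠ 1 := by
      rintro rfl
      exact riemannZeta_one_ne_zero hz
    obtain ⟨p, a, hp, ha, rfl⟩ := (isPrimePow_nat_iff k).1 hpp
    refine ⟨⟨?_, ?_⟩, ?_, ?_⟩
    · have : ¬ (p ^ a ∣ 1) := by
        intro h
        have := Nat.le_of_dvd one_pos h
        omega
      simp only [gk, if_neg this]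
      simp
    · intro m n hmn
      simp only
      rw [gk_mult p a ha hp m n hmn, Nat.cast_mul, Complex.natCast_mul_natCast_cpow,
        div_mul_div_comm]
    · have := aux_tendsto _ hk α hre
      rw [aux_eq _ hk α hre h1, hz, mul_zero] at this
      exact this
    · intro q hq
      rcases eq_or_ne p q with rfl | hpq
      · refine ⟨_, ?_, aux_local_eq p a hp α hre⟩
        refine mul_ne_zero ?_ (aux_one_sub_ne p hp α hre)
        intro h
        have h2 : ‖((p ^ a : ℕ) : ℂ) ^ (1 - α)‖ = 1 := by
          rw [← sub_eq_zero.1 h]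
          simp
        rw [Complex.norm_natCast_cpow_of_pos (by omega)] at h2
        have hlt : α.re < 1 := by
          by_contra h3
          exact riemannZeta_ne_zero_of_one_le_re (not_lt.1 h3) hz
        have := Real.one_lt_rpow (x := ((p ^ a : ℕ) : ℝ)) (z := (1 - α).re)
          (by exact_mod_cast hk) (by simp; linarith)
        linarith
      · exact ⟨_, aux_one_sub_ne q hq α hre, aux_local_ne p q a ha hp hq hpq α hre⟩
end

section
/- Let k > 1 be an integer and let α be a complex number with Re α > 0 and ζ(α) = 0, where ζ is the Riemann zeta function. Then the partial sums satisfy ∑_{n ≤ x} g_k(n)/n^α = O(x^{−Re α}), i.e., there is a constant C such that |∑_{n ≤ x} g_k(n)/n^α| ≤ C x^{−Re α} for all x ≥ 1. -/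
open Filter Finset

open MeasureTheory Topology

lemma gk_sum (k : ℕ) (hk : 1 < k) (n : ℕ) :
    ∑ i ∈ Finset.Icc 1 n, gk k i = ((n % k : ℕ) : ℂ) := by
  have h : ∑ i ∈ Finset.Icc 1 n, gk k i = (n : ℂ) - k * ((n / k : ℕ) : ℂ) := by
    induction n with
    | zero => simp
    | succ n ih =>
      rw [Finset.sum_Icc_succ_top (by omega), ih, Nat.succ_div, gk]
      split_ifs <;> push_cast <;> ring
  rw [h, sub_eq_iff_eq_add]
  exact_mod_cast (Nat.mod_add_div n k).symm

lemma gk_sum_le (k : ℕ) (hk : 1 < k) (n : ℕ) :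
    ‖∑ i ∈ Finset.Icc 1 n, gk k i‖ ≤ k := by
  rw [gk_sum k hk, Complex.norm_natCast]
  exact_mod_cast (Nat.mod_lt n (by omega)).le

lemma gk_hasSum (k : ℕ) (hk : 1 < k) {s : ℂ} (hs : 1 < s.re) :
    LSeriesHasSum (gk k) s ((1 - k * (k : ℂ) ^ (-s)) * riemannZeta s) := by
  have hs0 : s ≠ 0 := by rintro rfl; simp at hs; linarith
  have h1 : HasSum (fun n : ℕ => 1 / (n : ℂ) ^ s) (riemannZeta s) := by
    rw [zeta_eq_tsum_one_div_nat_cpow hs]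
    exact (Complex.summable_one_div_nat_cpow.mpr hs).hasSum
  have h2 : HasSum (fun n : ℕ => if k ∣ n then (k : ℂ) * (1 / (n : ℂ) ^ s) else 0)
      ((k * (k : ℂ) ^ (-s)) * riemannZeta s) := by
    have hinj : Function.Injective (fun m : ℕ => k * m) :=
      fun a b h => Nat.eq_of_mul_eq_mul_left (by omega) h
    rw [← hinj.hasSum_iff]
    · have e : (fun n : ℕ => if k ∣ n then (k : ℂ) * (1 / (n : ℂ) ^ s) else 0) ∘
          (fun m : ℕ => k * m) = fun m : ℕ => (k * (k : ℂ) ^ (-s)) * (1 / (m : ℂ) ^ s) := by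
        ext m
        simp only [Function.comp_apply, dvd_mul_right, if_true]
        rw [Nat.cast_mul, Complex.natCast_mul_natCast_cpow, Complex.cpow_neg]
        field_simp
      rw [e]
      exact h1.mul_left _
    · intro n hn
      rw [if_neg]
      rintro ⟨m, rfl⟩
      exact hn ⟨m, rfl⟩
  have h3 := h1.sub h2
  have e : LSeries.term (gk k) s = fun n : ℕ => 1 / (n : ℂ) ^ s -
      (if k ∣ n then (k : ℂ) * (1 / (n : ℂ) ^ s) else 0) := by
    ext n
    rw [LSeries.term_def]
    by_cases h : n = 0
    · simp [h, hs0]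
    · by_cases h' : k ∣ n
      · simp only [gk, h, h', if_true, if_false]; ring
      · simp [gk, h, h']
  rw [LSeriesHasSum, e, sub_mul, one_mul]
  exact h3

noncomputable def gkS (k : ℕ) (t : ℝ) : ℂ := ∑ i ∈ Finset.Icc 1 ⌊t⌋₊, gk k i

lemma gkS_locInt (k : ℕ) : LocallyIntegrableOn (gkS k) (Set.Ioi 0) := by
  have h := locallyIntegrableOn_mul_sum_Icc (𝕜 := ℂ) (gk k) (m := 1) (a := 0) le_rfl
    (g := fun _ => 1) (locallyIntegrableOn_const 1)
  simp only [one_mul] at h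
  exact h.mono_set Set.Ioi_subset_Ici_self

lemma gkS_top (k : ℕ) (hk : 1 < k) : gkS k =O[atTop] (fun t : ℝ => t ^ (-(0:ℝ))) := by
  refine Asymptotics.IsBigO.of_bound k (Eventually.of_forall fun t => ?_)
  simpa [gkS] using gk_sum_le k hk ⌊t⌋₊

lemma gkS_zero (k : ℕ) {t : ℝ} (ht : t < 1) : gkS k t = 0 := by
  simp [gkS, Nat.floor_eq_zero.mpr ht]

lemma gkS_bot (k : ℕ) (b : ℝ) : gkS k =O[𝓝[>] 0] (fun t : ℝ => t ^ (-b)) := by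
  refine Asymptotics.IsBigO.of_bound 0 ?_
  filter_upwards [mem_nhdsWithin_of_mem_nhds (Iio_mem_nhds (show (0:ℝ) < 1 by norm_num))] with t ht
  simp [gkS_zero k ht]

lemma gkS_mellin (k : ℕ) (s : ℂ) :
    mellin (gkS k) (-s) = ∫ t in Set.Ioi (1 : ℝ), gkS k t * (t : ℂ) ^ (-(s + 1)) := by
  rw [mellin, ← integral_Ici_eq_integral_Ioi (x := (1:ℝ))]
  have : ∀ t : ℝ, (t : ℂ) ^ (-s - 1) • gkS k t = gkS k t * (t : ℂ) ^ (-(s + 1)) := by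
    intro t; rw [smul_eq_mul, mul_comm, neg_add', sub_eq_add_neg]
  simp_rw [this]
  apply setIntegral_eq_of_subset_of_forall_sdiff_eq_zero measurableSet_Ioi
  · intro t ht; exact lt_of_lt_of_le one_pos (Set.mem_Ici.mp ht)
  · intro t ht
    rw [gkS_zero k (by simpa using ht.2), zero_mul]

lemma gkS_conv (k : ℕ) (hk : 1 < k) {s : ℂ} (hs : 0 < s.re) :
    IntegrableOn (fun t : ℝ => gkS k t * (t : ℂ) ^ (-(s + 1))) (Set.Ioi 0) := by
  have h := mellinConvergent_of_isBigO_rpow (s := -s) (b := -s.re - 1) (gkS_locInt k)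
    (gkS_top k hk) (by simpa using hs) (gkS_bot k _) (by simp)
  rw [MellinConvergent] at h
  refine h.congr_fun (fun t _ => ?_) measurableSet_Ioi
  simp only
  rw [smul_eq_mul, mul_comm, neg_add', sub_eq_add_neg]

lemma gk_identity (k : ℕ) (hk : 1 < k) {s : ℂ} (hs : 0 < s.re) :
    (1 - k * (k : ℂ) ^ (-s)) * riemannZeta₁ s = (s - 1) * (s * mellin (gkS k) (-s)) := by
  have hk0 : (k : ℂ) ≠ 0 := by exact_mod_cast (by omega : k ≠ 0)
  have hU : IsOpen {s : ℂ | 0 < s.re} := isOpen_lt continuous_const Complex.continuous_re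
  have hconv : IsPreconnected {s : ℂ | 0 < s.re} := (convex_halfSpace_re_gt 0).isPreconnected
  have hf : AnalyticOnNhd ℂ (fun s : ℂ => (1 - k * (k : ℂ) ^ (-s)) * riemannZeta₁ s)
      {s : ℂ | 0 < s.re} := by
    refine DifferentiableOn.analyticOnNhd (fun z _ => ?_) hU
    refine DifferentiableAt.differentiableWithinAt ?_
    refine DifferentiableAt.mul ?_ differentiable_riemannZeta₁.differentiableAt
    refine (differentiableAt_const _).sub ((differentiableAt_const _).mul ?_)
    exact differentiableAt_id.neg.const_cpow (Or.inl hk0)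
  have hg : AnalyticOnNhd ℂ (fun s : ℂ => (s - 1) * (s * mellin (gkS k) (-s)))
      {s : ℂ | 0 < s.re} := by
    refine DifferentiableOn.analyticOnNhd (fun z hz => ?_) hU
    refine DifferentiableAt.differentiableWithinAt ?_
    have hm : DifferentiableAt ℂ (mellin (gkS k)) (-z) :=
      mellin_differentiableAt_of_isBigO_rpow (b := -z.re - 1) (gkS_locInt k)
        (gkS_top k hk) (by simpa using hz) (gkS_bot k _) (by simp)
    have hm2 : DifferentiableAt ℂ (fun s : ℂ => mellin (gkS k) (-s)) z :=
      DifferentiableAt.comp (g := mellin (gkS k)) (f := fun s : ℂ => -s) z hm differentiableAt_id.neg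
    exact (differentiableAt_id.sub_const 1).mul (differentiableAt_id.mul hm2)
  refine hf.eqOn_of_preconnected_of_eventuallyEq hg hconv (z₀ := 2) (by simp) ?_ hs
  filter_upwards [(isOpen_lt continuous_const Complex.continuous_re).mem_nhds
    (show (1:ℝ) < (2:ℂ).re by norm_num)] with z hz
  have hz : 1 < z.re := hz
  have hz1 : z ≠ 1 := by rintro rfl; simp at hz
  have hL := gk_hasSum k hk hz
  have hI := LSeries_eq_mul_integral (gk k) le_rfl (s := z) (by linarith)
    hL.LSeriesSummable (by
      refine Asymptotics.IsBigO.of_bound k (Eventually.of_forall fun t => ?_)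
      simpa using gk_sum_le k hk _)
  have := gkS_mellin k z
  unfold gkS at this
  rw [← this, hL.LSeries_eq] at hI
  have h1 : z - 1 ≠ 0 := sub_ne_zero.mpr hz1
  change _ = (z - 1) * (z * mellin (fun t => ∑ i ∈ Finset.Icc 1 ⌊t⌋₊, gk k i) (-z))
  rw [← hI, riemannZeta_eq_inv_sub_mul hz1]
  field_simp

theorem stmt19 (k : ℕ) (hk : 1 < k) (α : ℂ) (hα : 0 < α.re) (hζ : riemannZeta α = 0) :
    ∃ C : ℝ, ∀ x : ℝ, 1 ≤ x →
      ‖∑ n ∈ Finset.Icc 1 ⌊x⌋₊, gk k n / (n : ℂ) ^ α‖ ≤ C * x ^ (-α.re) := by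
  have hα0 : α ≠ 0 := by rintro rfl; simp at hα
  have hα1 : α ≠ 1 := by rintro rfl; exact riemannZeta_one_ne_zero hζ
  have h1 : α - 1 ≠ 0 := sub_ne_zero.mpr hα1
  have hM : ∫ t in Set.Ioi (1 : ℝ), gkS k t * (t : ℂ) ^ (-(α + 1)) = 0 := by
    have h := gk_identity k hk hα
    rw [riemannZeta_eq_inv_sub_mul hα1] at hζ
    have hz : riemannZeta₁ α = 0 := by simpa [h1] using hζ
    rw [hz, mul_zero, gkS_mellin] at h
    simpa [h1, hα0] using h.symm
  refine ⟨k + ‖α‖ * (k / α.re), fun x hx => ?_⟩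
  have hx0 : 0 < x := by linarith
  have hder : ∀ t : ℝ, 1 ≤ t → HasDerivAt (fun t : ℝ => (t : ℂ) ^ (-α)) (-α * (t : ℂ) ^ (-(α + 1))) t := by
    intro t ht
    have := hasDerivAt_ofReal_cpow_const (x := t) (by linarith) (r := -α) (by simpa using hα0)
    rwa [show -α - 1 = -(α + 1) by ring] at this
  have habel := sum_mul_eq_sub_integral_mul₀ (𝕜 := ℂ) (f := fun t : ℝ => (t : ℂ) ^ (-α))
    (fun n => if n = 0 then 0 else gk k n) (by simp) x
    (fun t ht => (hder t ht.1).differentiableAt) (by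
      refine IntegrableOn.congr_fun (f := fun t : ℝ => -α * (t : ℂ) ^ (-(α + 1))) ?_
        (fun t ht => (hder t ht.1).deriv.symm) measurableSet_Icc
      refine ContinuousOn.integrableOn_Icc fun t ht => ?_
      refine ContinuousAt.continuousWithinAt ?_
      refine continuousAt_const.mul ?_
      exact Complex.continuousAt_ofReal_cpow_const _ _ (Or.inr (by linarith [ht.1])))
  have hS : ∀ n : ℕ, ∑ i ∈ Finset.Icc 0 n, (if i = 0 then 0 else gk k i)
      = ∑ i ∈ Finset.Icc 1 n, gk k i := by
    intro n
    rw [← Finset.sum_subset (Finset.Icc_subset_Icc_left (Nat.zero_le 1))]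
    · exact Finset.sum_congr rfl fun i hi => by
        rw [if_neg]; have := Finset.mem_Icc.mp hi; omega
    · intro i hi hi'
      simp only [Finset.mem_Icc] at hi hi'
      rw [if_pos (by omega)]
  have hL : ∑ i ∈ Finset.Icc 0 ⌊x⌋₊, (((i : ℕ) : ℝ) : ℂ) ^ (-α) * (if i = 0 then 0 else gk k i)
      = ∑ n ∈ Finset.Icc 1 ⌊x⌋₊, gk k n / (n : ℂ) ^ α := by
    rw [← Finset.sum_subset (Finset.Icc_subset_Icc_left (Nat.zero_le 1))]
    · refine Finset.sum_congr rfl fun i hi => ?_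
      rw [if_neg, Complex.cpow_neg]
      · push_cast; rw [div_eq_mul_inv, mul_comm]
      · have := Finset.mem_Icc.mp hi; omega
    · intro i hi hi'
      simp only [Finset.mem_Icc] at hi hi'
      rw [if_pos (by omega), mul_zero]
  simp only [hS] at habel
  rw [hL] at habel
  have hint : ∫ t in Set.Ioc 1 x, deriv (fun t : ℝ => (t : ℂ) ^ (-α)) t *
      ∑ i ∈ Finset.Icc 1 ⌊t⌋₊, gk k i
      = -α * ∫ t in Set.Ioc 1 x, gkS k t * (t : ℂ) ^ (-(α + 1)) := by
    rw [← integral_const_mul]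
    refine setIntegral_congr_fun measurableSet_Ioc fun t ht => ?_
    rw [(hder t ht.1.le).deriv, gkS]; ring
  have hc := gkS_conv k hk hα
  have hsplit : (∫ t in Set.Ioc 1 x, gkS k t * (t : ℂ) ^ (-(α + 1)))
      + (∫ t in Set.Ioi x, gkS k t * (t : ℂ) ^ (-(α + 1))) = 0 := by
    rw [← hM, ← Set.Ioc_union_Ioi_eq_Ioi hx]
    refine (setIntegral_union (Set.Ioc_disjoint_Ioi le_rfl) measurableSet_Ioi ?_ ?_).symm
    · exact hc.mono_set fun t ht => lt_trans one_pos ht.1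
    · exact hc.mono_set fun t ht => lt_trans hx0 ht
  have hb : ‖∫ t in Set.Ioi x, gkS k t * (t : ℂ) ^ (-(α + 1))‖ ≤ k / α.re * x ^ (-α.re) := by
    have hI := integrableOn_Ioi_rpow_of_lt (a := -(α.re + 1)) (by linarith) hx0
    have := norm_integral_le_of_norm_le (hI.const_mul (k : ℝ))
      (f := fun t : ℝ => gkS k t * (t : ℂ) ^ (-(α + 1))) (by
        refine (ae_restrict_iff' measurableSet_Ioi).mpr (Eventually.of_forall fun t ht => ?_)
        have ht0 : 0 < t := lt_trans hx0 ht
        rw [norm_mul, Complex.norm_cpow_eq_rpow_re_of_pos ht0]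
        simp only [Complex.neg_re, Complex.add_re, Complex.one_re]
        exact mul_le_mul_of_nonneg_right (gk_sum_le k hk _) (by positivity))
    refine this.trans (le_of_eq ?_)
    rw [integral_const_mul, integral_Ioi_rpow_of_lt (by linarith) hx0,
      show -(α.re + 1) + 1 = -α.re by ring]
    field_simp
  have heq : ∑ n ∈ Finset.Icc 1 ⌊x⌋₊, gk k n / (n : ℂ) ^ α
      = (x : ℂ) ^ (-α) * (∑ i ∈ Finset.Icc 1 ⌊x⌋₊, gk k i)
        - α * ∫ t in Set.Ioi x, gkS k t * (t : ℂ) ^ (-(α + 1)) := by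
    rw [habel, hint, eq_neg_of_add_eq_zero_left hsplit]; ring
  rw [heq]
  calc _ ≤ ‖(x : ℂ) ^ (-α) * (∑ i ∈ Finset.Icc 1 ⌊x⌋₊, gk k i)‖
        + ‖α * ∫ t in Set.Ioi x, gkS k t * (t : ℂ) ^ (-(α + 1))‖ := norm_sub_le _ _
    _ ≤ x ^ (-α.re) * k + ‖α‖ * (k / α.re * x ^ (-α.re)) := by
      rw [norm_mul, norm_mul, Complex.norm_cpow_eq_rpow_re_of_pos hx0, Complex.neg_re]
      gcongr
      exact gk_sum_le k hk _
    _ = _ := by ring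
end
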